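/- Let A_n = [a_n, b_n] be a sequence of compact intervals in ℝ with b_n − a_n → ∞, and assume there exists a constant d > 0 such that |a_n| < d·(b_n − a_n) for all n. Then the counting autocorrelation of ℙ with respect to (A_n) exists and equals δ_0: writing F_n = ℙ ∩ A_n, for every continuous compactly supported f : ℝ → ℂ one has (1/card F_n)·Σ_{x,y∈F_n} f(x−y) → f(0) as n → ∞ (the expression being interpreted as 0 when F_n = ∅). -/

import Mathlib

open Filter Topology Set

/-- The set of prime numbers together with their negatives, as a subset of `ℝ`. -/
def PrimesR : Set ℝ := {x | ∃ p : ℕ, p.Prime ∧ (x = (p : ℝ) ∨ x = -(p : ℝ))}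

/-- The (counting-normalised) autocorrelation sum of the finite sample `F` applied to a
test function `f`; interpreted as `0` when `F = ∅` (since then `(F.ncard : ℂ)⁻¹ = 0`). -/
noncomputable def autoCorr (F : Set ℝ) (f : ℝ → ℂ) : ℂ :=
  ((F.ncard : ℂ))⁻¹ * ∑ᶠ x ∈ F, ∑ᶠ y ∈ F, f (x - y)

/-!
Let `N_h` be the number of `m ∈ F` with `m + h ∈ F` as well, where `F = ℙ ∩ [a, b]`. The
autocorrelation sum is `∑_h (N_h / #F) f(h)`, in which only finitely many integers `h` matter, so
it is enough that `N_h = o(#F)` for every `h ≠ 0`. With `L = b - a` and `a = O(L)`, this follows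
from `#F ≫ L / log L` and `N_h = o(L / log L)`.

Both rest on bounds for the primes of a unit residue class modulo `Q` in windows `[r X, X]`: the
sum of `log p` over them is `≫ X`, and at most `B X / φ(Q)` with `B` independent of `Q`. They come
from a Tauberian argument of Wiener–Ikehara type: the logarithmic derivatives of the Dirichlet
`L`-functions have no singularity on `Re s = 1` apart from the pole at `1`, so, after smoothing
with a Fejér kernel in the variable `log n`, the von Mangoldt function on the class behaves like
the constant `1 / φ(Q)`.

A prime `p` for which `p + h` is also prime lies, with finitely many exceptions, in a residue class
`c` modulo `Q` with `c` and `c + h` both units. For `Q` a product of distinct primes not dividing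
`h`, these make up a proportion at most `exp (-∑_{p ∣ Q} 1 / p)` of the unit classes, which is
arbitrarily small since `∑ 1 / p` diverges. Hence `N_h = o(L / log L)`.
-/

open Asymptotics Real
open scoped Finset
open ArithmeticFunction hiding log
open ArithmeticFunction.vonMangoldt

/-! ### Sequences with bounded means -/

/-- The sequence `w` is bounded on average: `∑_{1 ≤ n ≤ N} |w n| = O(N)`, uniformly in `N`. -/
def HasBoundedMean (w : ℕ → ℝ) : Prop :=
  ∃ C : ℝ, ∀ N : ℕ, ∑ n ∈ Finset.Icc 1 N, |w n| ≤ C * N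

lemma inv_one_add_sq_le_of_abs_sub_le_one {u v : ℝ} (h : |u - v| ≤ 1) :
    (1 + u ^ 2)⁻¹ ≤ 3 * (1 + v ^ 2)⁻¹ := by
  have h_sq : (v - u) ^ 2 ≤ 1 := by rwa [sq_le_one_iff_abs_le_one, abs_sub_comm]
  rw [← div_eq_mul_inv, inv_le_comm₀ (by positivity) (by positivity), inv_div,
    div_le_iff₀ (by positivity)]
  nlinarith [sq_nonneg (v - 2 * u)]

lemma summable_int_inv_one_add_sq : Summable fun k : ℤ ↦ (1 + (k : ℝ) ^ 2)⁻¹ := by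
  refine (Real.summable_one_div_int_pow.mpr one_lt_two).of_norm_bounded_eventually ?_
  filter_upwards [(Set.finite_singleton (0 : ℤ)).compl_mem_cofinite] with k hk
  have hk0 : (k : ℝ) ≠ 0 := by exact_mod_cast hk
  rw [norm_of_nonneg (by positivity), one_div]
  gcongr
  linarith

lemma exists_sum_inv_one_add_sub_sq_le :
    ∃ B : ℝ, ∀ (y : ℝ) (s : Finset ℕ), ∑ j ∈ s, (1 + ((j : ℝ) - y) ^ 2)⁻¹ ≤ B := by
  refine ⟨3 * ∑' k : ℤ, (1 + (k : ℝ) ^ 2)⁻¹, fun y s ↦ ?_⟩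
  have h_shift (j : ℕ) :
      (1 + ((j : ℝ) - y) ^ 2)⁻¹ ≤ 3 * (1 + (((j : ℤ) - ⌊y⌋ : ℤ) : ℝ) ^ 2)⁻¹ := by
    refine inv_one_add_sq_le_of_abs_sub_le_one ?_
    push_cast
    rw [abs_le]
    constructor <;> linarith [Int.floor_le y, Int.lt_floor_add_one y]
  have h_inj : Function.Injective fun j : ℕ ↦ (j : ℤ) - ⌊y⌋ :=
    sub_left_injective.comp Nat.cast_injective
  calc ∑ j ∈ s, (1 + ((j : ℝ) - y) ^ 2)⁻¹
      ≤ 3 * ∑ j ∈ s, (1 + (((j : ℤ) - ⌊y⌋ : ℤ) : ℝ) ^ 2)⁻¹ := by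
        rw [Finset.mul_sum]
        exact Finset.sum_le_sum fun j _ ↦ h_shift j
    _ = 3 * ∑ k ∈ s.image fun j : ℕ ↦ (j : ℤ) - ⌊y⌋, (1 + (k : ℝ) ^ 2)⁻¹ := by
        rw [Finset.sum_image h_inj.injOn]
    _ ≤ 3 * ∑' k : ℤ, (1 + (k : ℝ) ^ 2)⁻¹ := by
        gcongr
        exact summable_int_inv_one_add_sq.sum_le_tsum _ fun k _ ↦ by positivity

lemma sum_floor_log_eq_abs_div_le {w : ℕ → ℝ} {C : ℝ}
    (hw : ∀ N : ℕ, ∑ n ∈ Finset.Icc 1 N, |w n| ≤ C * N) (s : Finset ℕ) (j : ℕ) :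
    ∑ n ∈ s with ⌊log (n : ℕ)⌋₊ = j, |w n| / n ≤ C * exp 1 := by
  have hC : 0 ≤ C := by simpa using (abs_nonneg (w 1)).trans (by simpa using hw 1)
  have h_shell {n : ℕ} (hn : n ≠ 0) (hj : ⌊log n⌋₊ = j) :
      exp j ≤ n ∧ (n : ℝ) ≤ exp (j + 1) := by
    have hn' : (0 : ℝ) < n := by positivity
    rw [← le_log_iff_exp_le hn', ← log_le_iff_le_exp hn', ← hj]
    exact ⟨Nat.floor_le (log_natCast_nonneg n), (Nat.lt_floor_add_one _).le⟩
  calc ∑ n ∈ s with ⌊log (n : ℕ)⌋₊ = j, |w n| / n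
      = ∑ n ∈ s with ⌊log (n : ℕ)⌋₊ = j ∧ n ≠ 0, |w n| / n := by
        rw [← Finset.filter_filter]
        refine (Finset.sum_filter_of_ne fun n _ hn ↦ ?_).symm
        rintro rfl
        simp at hn
    _ ≤ ∑ n ∈ s with ⌊log (n : ℕ)⌋₊ = j ∧ n ≠ 0, |w n| * exp (-j) := by
        refine Finset.sum_le_sum fun n hn ↦ ?_
        obtain ⟨hj, hn0⟩ := (Finset.mem_filter.mp hn).2
        rw [exp_neg, div_eq_mul_inv]
        gcongr
        exact (h_shell hn0 hj).1
    _ ≤ ∑ n ∈ Finset.Icc 1 ⌊exp (j + 1)⌋₊, |w n| * exp (-j) := by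
        refine Finset.sum_le_sum_of_subset_of_nonneg (fun n hn ↦ ?_) fun n _ _ ↦ by positivity
        obtain ⟨hj, hn0⟩ := (Finset.mem_filter.mp hn).2
        exact Finset.mem_Icc.mpr ⟨Nat.one_le_iff_ne_zero.mpr hn0, Nat.le_floor (h_shell hn0 hj).2⟩
    _ ≤ C * exp (j + 1) * exp (-j) := by
        rw [← Finset.sum_mul]
        grw [hw, Nat.floor_le (exp_pos _).le]
    _ = C * exp 1 := by rw [mul_assoc, ← exp_add, add_neg_cancel_comm]

lemma HasBoundedMean.exists_sum_le {w : ℕ → ℝ} (hw : HasBoundedMean w) :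
    ∃ B : ℝ, ∀ (y : ℝ) (s : Finset ℕ), ∑ n ∈ s, |w n| / n * (1 + (log n - y) ^ 2)⁻¹ ≤ B := by
  obtain ⟨C, hC⟩ := hw
  obtain ⟨B, hB⟩ := exists_sum_inv_one_add_sub_sq_le
  have hC0 : 0 ≤ C := by simpa using (abs_nonneg (w 1)).trans (by simpa using hC 1)
  refine ⟨3 * (C * exp 1) * B, fun y s ↦ ?_⟩
  have h_shell (n : ℕ) : (1 + (log n - y) ^ 2)⁻¹ ≤ 3 * (1 + ((⌊log n⌋₊ : ℝ) - y) ^ 2)⁻¹ := by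
    refine inv_one_add_sq_le_of_abs_sub_le_one ?_
    rw [sub_sub_sub_cancel_right, abs_le]
    constructor <;>
      linarith [Nat.floor_le (log_natCast_nonneg n), Nat.lt_floor_add_one (log (n : ℝ))]
  calc ∑ n ∈ s, |w n| / n * (1 + (log n - y) ^ 2)⁻¹
      ≤ ∑ n ∈ s, |w n| / n * (3 * (1 + ((⌊log n⌋₊ : ℝ) - y) ^ 2)⁻¹) := by
        gcongr with n
        exact h_shell n
    _ = ∑ j ∈ s.image (fun n : ℕ ↦ ⌊log n⌋₊),
          (∑ n ∈ s with ⌊log (n : ℕ)⌋₊ = j, |w n| / n) * (3 * (1 + ((j : ℝ) - y) ^ 2)⁻¹) := by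
        rw [← Finset.sum_fiberwise_of_maps_to (g := fun n : ℕ ↦ ⌊log n⌋₊)
          (fun n hn ↦ Finset.mem_image_of_mem (fun n : ℕ ↦ ⌊log n⌋₊) hn)]
        refine Finset.sum_congr rfl fun j _ ↦ ?_
        rw [Finset.sum_mul]
        exact Finset.sum_congr rfl fun n hn ↦ by rw [(Finset.mem_filter.mp hn).2]
    _ ≤ ∑ j ∈ s.image (fun n : ℕ ↦ ⌊log n⌋₊), C * exp 1 * (3 * (1 + ((j : ℝ) - y) ^ 2)⁻¹) := by
        gcongr with j
        exact sum_floor_log_eq_abs_div_le hC s j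
    _ = 3 * (C * exp 1) * ∑ j ∈ s.image (fun n : ℕ ↦ ⌊log n⌋₊), (1 + ((j : ℝ) - y) ^ 2)⁻¹ := by
        rw [Finset.mul_sum]
        exact Finset.sum_congr rfl fun j _ ↦ by ring
    _ ≤ 3 * (C * exp 1) * B := by
        gcongr
        exact hB y _

lemma HasBoundedMean.lseriesSummable {w : ℕ → ℝ} (hw : HasBoundedMean w) {s : ℂ}
    (hs : 1 < s.re) : LSeriesSummable (fun n ↦ (w n : ℂ)) s := by
  obtain ⟨C, hC⟩ := hw
  refine LSeriesSummable_of_sum_norm_bigO (r := 1) ?_ zero_le_one hs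
  refine IsBigO.of_bound C (Eventually.of_forall fun N ↦ ?_)
  simp only [Complex.norm_real, norm_eq_abs, rpow_one, Nat.abs_cast]
  rw [abs_of_nonneg (by positivity)]
  exact hC N

lemma HasBoundedMean.sub {v w : ℕ → ℝ} (hv : HasBoundedMean v) (hw : HasBoundedMean w) :
    HasBoundedMean (fun n ↦ v n - w n) := by
  obtain ⟨C, hC⟩ := hv
  obtain ⟨D, hD⟩ := hw
  refine ⟨C + D, fun N ↦ ?_⟩
  calc ∑ n ∈ Finset.Icc 1 N, |v n - w n|
      ≤ ∑ n ∈ Finset.Icc 1 N, (|v n| + |w n|) := Finset.sum_le_sum fun n _ ↦ abs_sub _ _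
    _ ≤ (C + D) * N := by rw [Finset.sum_add_distrib, add_mul]; exact add_le_add (hC N) (hD N)

lemma hasBoundedMean_const (k : ℝ) : HasBoundedMean fun _ ↦ k :=
  ⟨|k|, fun N ↦ by simp [mul_comm]⟩

/-! ### The Fejér kernel -/

/-- The Fejér kernel of the real line, `u ↦ (sin (u / 2) / (u / 2)) ^ 2`: nonnegative, and the
Fourier transform of the tent function on `[-1, 1]`. -/
noncomputable def fejerKernel (u : ℝ) : ℝ := sinc (u / 2) ^ 2

lemma fejerKernel_nonneg (u : ℝ) : 0 ≤ fejerKernel u := sq_nonneg _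

lemma fejerKernel_le_one (u : ℝ) : fejerKernel u ≤ 1 :=
  (sq_le_one_iff_abs_le_one _).mpr (abs_sinc_le_one _)

lemma fejerKernel_mul_sq (u : ℝ) : fejerKernel u * u ^ 2 = 2 * (1 - cos u) := by
  rcases eq_or_ne u 0 with rfl | hu
  · simp
  rw [fejerKernel, sinc_of_ne_zero (by positivity), div_pow, sin_sq_eq_half_sub,
    mul_div_cancel₀ u two_ne_zero]
  field

lemma fejerKernel_mul_sq_le_four (u : ℝ) : fejerKernel u * u ^ 2 ≤ 4 := by
  rw [fejerKernel_mul_sq]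
  linarith [neg_one_le_cos u]

lemma fejerKernel_mul_le {T : ℝ} (hT : 0 < T) (u : ℝ) :
    fejerKernel (T * u) ≤ (1 + 4 / T ^ 2) * (1 + u ^ 2)⁻¹ := by
  rw [← div_eq_mul_inv, le_div_iff₀ (by positivity), mul_one_add]
  refine add_le_add (fejerKernel_le_one _) ?_
  rw [le_div_iff₀ (by positivity)]
  linarith [fejerKernel_mul_sq_le_four (T * u)]

lemma half_le_fejerKernel {u : ℝ} (hu : |u| ≤ 1) : 1 / 2 ≤ fejerKernel u := by
  rcases eq_or_ne u 0 with rfl | hu0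
  · norm_num [fejerKernel]
  have h_cos : cos u ≤ 1 - u ^ 2 / 2 + |u| ^ 4 * (5 / 96) := by
    linarith [(abs_le.mp (cos_bound hu)).2]
  have h_pow : |u| ^ 4 ≤ u ^ 2 := by
    rw [← sq_abs u]
    exact pow_le_pow_of_le_one (abs_nonneg u) hu (by norm_num)
  refine le_of_mul_le_mul_right ?_ (by positivity : 0 < u ^ 2)
  rw [fejerKernel_mul_sq]
  nlinarith

lemma integral_one_sub_mul_cos {u : ℝ} (hu : u ≠ 0) :
    ∫ t in (0 : ℝ)..1, (1 - t) * cos (t * u) = (1 - cos u) / u ^ 2 := by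
  have h_deriv (t : ℝ) : HasDerivAt
      (fun t ↦ (1 - t) * sin (t * u) / u - cos (t * u) / u ^ 2) ((1 - t) * cos (t * u)) t := by
    have h_mul : HasDerivAt (fun t : ℝ ↦ t * u) u t := by
      simpa using (hasDerivAt_id t).mul_const u
    have h_sub : HasDerivAt (fun t : ℝ ↦ 1 - t) (-1) t := by
      simpa using (hasDerivAt_id t).const_sub 1
    refine (((h_sub.mul h_mul.sin).div_const u).sub (h_mul.cos.div_const (u ^ 2))).congr_deriv ?_
    field
  rw [intervalIntegral.integral_eq_sub_of_hasDerivAt (fun t _ ↦ h_deriv t)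
    (Continuous.intervalIntegrable (by fun_prop) _ _)]
  simp only [sub_self, zero_mul, zero_div, sin_zero, mul_zero, cos_zero, one_mul]
  ring

lemma fejerKernel_eq_two_mul_integral (u : ℝ) :
    fejerKernel u = 2 * ∫ t in (0 : ℝ)..1, (1 - t) * cos (t * u) := by
  rcases eq_or_ne u 0 with rfl | hu
  · simp only [fejerKernel, zero_div, sinc_zero, mul_zero, cos_zero, mul_one]
    rw [intervalIntegral.integral_sub (by simp) (by simp)]
    norm_num
  · rw [integral_one_sub_mul_cos hu, ← mul_div_assoc, eq_div_iff (by positivity),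
      fejerKernel_mul_sq]

lemma ofReal_fejerKernel_eq_integral (u : ℝ) :
    (fejerKernel u : ℂ) =
      ∫ t in (-1 : ℝ)..1, ((1 - |t| : ℝ) : ℂ) * Complex.exp ((t * u : ℝ) * Complex.I) := by
  have h_int (p q : ℝ) : IntervalIntegrable (fun t : ℝ ↦
      ((1 - |t| : ℝ) : ℂ) * Complex.exp ((t * u : ℝ) * Complex.I)) MeasureTheory.volume p q :=
    Continuous.intervalIntegrable (by fun_prop) _ _
  have h_neg : ∫ t in (-1 : ℝ)..0, ((1 - |t| : ℝ) : ℂ) * Complex.exp ((t * u : ℝ) * Complex.I) =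
      ∫ t in (0 : ℝ)..1, ((1 - |t| : ℝ) : ℂ) * Complex.exp (-(t * u : ℝ) * Complex.I) := by
    simpa using (intervalIntegral.integral_comp_neg (a := 0) (b := 1) fun t : ℝ ↦
      ((1 - |t| : ℝ) : ℂ) * Complex.exp ((t * u : ℝ) * Complex.I)).symm
  rw [← intervalIntegral.integral_add_adjacent_intervals (h_int (-1) 0) (h_int 0 1), h_neg,
    ← intervalIntegral.integral_add (Continuous.intervalIntegrable (by fun_prop) _ _) (h_int 0 1),
    fejerKernel_eq_two_mul_integral, ← intervalIntegral.integral_const_mul,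
    ← intervalIntegral.integral_ofReal]
  refine intervalIntegral.integral_congr fun t ht ↦ ?_
  rw [uIcc_of_le zero_le_one] at ht
  simp only [abs_of_nonneg ht.1, Complex.ofReal_mul, Complex.ofReal_cos, Complex.cos]
  push_cast
  ring

/-! ### Fejér means and the Tauberian theorem -/

/-- The Fejér mean of `w` at logarithmic position `y` and scale `1 / T`: the weights `w n / n`
smoothed by the kernel `fejerKernel (T * (log n - y))`, concentrated on `|log n - y| ≲ 1 / T`. -/
noncomputable def fejerMean (w : ℕ → ℝ) (T y : ℝ) : ℝ :=
  ∑' n : ℕ, w n / n * fejerKernel (T * (log n - y))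

lemma abs_div_mul_fejerKernel_le (w : ℕ → ℝ) {T : ℝ} (hT : 0 < T) (y : ℝ) (n : ℕ) :
    |w n / n * fejerKernel (T * (log n - y))| ≤
      (1 + 4 / T ^ 2) * (|w n| / n * (1 + (log n - y) ^ 2)⁻¹) := by
  rw [abs_mul, abs_div, Nat.abs_cast, abs_of_nonneg (fejerKernel_nonneg _), mul_left_comm]
  gcongr
  exact fejerKernel_mul_le hT _

section BoundedMean

variable {w : ℕ → ℝ} {T : ℝ}

lemma HasBoundedMean.summable_abs_div_mul (hw : HasBoundedMean w) (y : ℝ) :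
    Summable fun n : ℕ ↦ |w n| / n * (1 + (log n - y) ^ 2)⁻¹ := by
  obtain ⟨B, hB⟩ := hw.exists_sum_le
  exact summable_of_sum_le (fun n ↦ by positivity) (hB y)

lemma HasBoundedMean.summable_div_mul_fejerKernel (hw : HasBoundedMean w) (hT : 0 < T) (y : ℝ) :
    Summable fun n : ℕ ↦ w n / n * fejerKernel (T * (log n - y)) :=
  .of_norm_bounded ((hw.summable_abs_div_mul y).mul_left _)
    fun n ↦ abs_div_mul_fejerKernel_le w hT y n

lemma HasBoundedMean.exists_fejerMean_le (hw : HasBoundedMean w) (hT : 0 < T) :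
    ∃ B : ℝ, ∀ y, fejerMean w T y ≤ B := by
  obtain ⟨B, hB⟩ := hw.exists_sum_le
  refine ⟨(1 + 4 / T ^ 2) * B, fun y ↦
    (hw.summable_div_mul_fejerKernel hT y).tsum_le_of_sum_le fun s ↦ ?_⟩
  calc ∑ n ∈ s, w n / n * fejerKernel (T * (log n - y))
      ≤ (1 + 4 / T ^ 2) * ∑ n ∈ s, |w n| / n * (1 + (log n - y) ^ 2)⁻¹ := by
        rw [Finset.mul_sum]
        exact Finset.sum_le_sum fun n _ ↦
          (le_abs_self _).trans (abs_div_mul_fejerKernel_le w hT y n)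
    _ ≤ (1 + 4 / T ^ 2) * B := by grw [hB y s]

lemma HasBoundedMean.sum_le_fejerMean (hw : HasBoundedMean w) (hT : 0 < T) (hw0 : 0 ≤ w) (y : ℝ)
    (s : Finset ℕ) :
    ∑ n ∈ s, w n / n * fejerKernel (T * (log n - y)) ≤ fejerMean w T y :=
  (hw.summable_div_mul_fejerKernel hT y).sum_le_tsum s fun n _ ↦
    mul_nonneg (div_nonneg (hw0 n) n.cast_nonneg) (fejerKernel_nonneg _)

end BoundedMean

lemma term_sub_mul_I (f : ℕ → ℂ) (s : ℂ) (τ : ℝ) (n : ℕ) :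
    LSeries.term f (s - τ * Complex.I) n =
      LSeries.term f s n * Complex.exp ((τ * log n : ℝ) * Complex.I) := by
  rcases eq_or_ne n 0 with rfl | hn
  · simp
  have hn' : (n : ℂ) ≠ 0 := by exact_mod_cast hn
  rw [LSeries.term_of_ne_zero hn, LSeries.term_of_ne_zero hn, Complex.cpow_sub _ _ hn',
    div_div_eq_mul_div, mul_div_right_comm, Complex.cpow_def_of_ne_zero hn' (τ * Complex.I),
    ← Complex.natCast_log]
  congr 2
  push_cast
  ring

lemma norm_one_sub_abs_mul_exp_le {t : ℝ} (ht : t ∈ Icc (-1) 1) (x : ℝ) :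
    ‖((1 - |t| : ℝ) : ℂ) * Complex.exp (x * Complex.I)‖ ≤ 1 := by
  rw [norm_mul, Complex.norm_exp_ofReal_mul_I, mul_one, Complex.norm_real, norm_eq_abs, abs_le]
  constructor <;> linarith [abs_le.mpr ht, abs_nonneg t]

lemma hasSum_term_mul_fejerKernel {f : ℕ → ℂ} {σ : ℝ} (hf : LSeriesSummable f σ) (T y : ℝ) :
    HasSum (fun n : ℕ ↦ LSeries.term f σ n * fejerKernel (T * (log n - y)))
      (∫ t in (-1 : ℝ)..1, ((1 - |t| : ℝ) : ℂ) * Complex.exp ((-(t * T * y) : ℝ) * Complex.I) *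
        LSeries f (σ - (t * T : ℝ) * Complex.I)) := by
  have h_term (n : ℕ) (t : ℝ) :
      ((1 - |t| : ℝ) : ℂ) * Complex.exp ((-(t * T * y) : ℝ) * Complex.I) *
          LSeries.term f (σ - (t * T : ℝ) * Complex.I) n =
        LSeries.term f σ n * (((1 - |t| : ℝ) : ℂ) *
          Complex.exp ((t * (T * (log n - y)) : ℝ) * Complex.I)) := by
    have h_phase : ((t * (T * (log n - y)) : ℝ) : ℂ) * Complex.I =
        (-(t * T * y) : ℝ) * Complex.I + (t * T * log n : ℝ) * Complex.I := by
      push_cast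
      ring
    rw [term_sub_mul_I, h_phase, Complex.exp_add]
    ring
  have h_summable (t : ℝ) : LSeriesSummable f (σ - (t * T : ℝ) * Complex.I) :=
    hf.of_re_le_re (by simp)
  have h_swap := intervalIntegral.hasSum_integral_of_dominated_convergence
    (μ := MeasureTheory.volume) (a := -1) (b := 1) (fun n _ ↦ ‖LSeries.term f σ n‖)
    (F := fun n (t : ℝ) ↦ ((1 - |t| : ℝ) : ℂ) * Complex.exp ((-(t * T * y) : ℝ) * Complex.I) *
      LSeries.term f (σ - (t * T : ℝ) * Complex.I) n)
    (fun n ↦ by simp_rw [h_term]; exact Continuous.aestronglyMeasurable (by fun_prop))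
    (fun n ↦ .of_forall fun t ht ↦ by
      rw [uIoc_of_le (by norm_num)] at ht
      rw [h_term, norm_mul]
      exact mul_le_of_le_one_right (norm_nonneg _)
        (norm_one_sub_abs_mul_exp_le (Ioc_subset_Icc_self ht) _))
    (.of_forall fun _ _ ↦ hf.norm) (by simp)
    (.of_forall fun t _ ↦ (h_summable t).hasSum.mul_left _)
  refine h_swap.congr_fun fun n ↦ ?_
  simp_rw [h_term]
  rw [intervalIntegral.integral_const_mul, ← ofReal_fejerKernel_eq_integral]

lemma HasBoundedMean.tendsto_tsum_term_mul_fejerKernel {w : ℕ → ℝ} (hw : HasBoundedMean w)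
    {T : ℝ} (hT : 0 < T) (y : ℝ) :
    Tendsto (fun σ : ℝ ↦ ∑' n : ℕ, LSeries.term (fun n ↦ (w n : ℂ)) σ n *
      fejerKernel (T * (log n - y))) (𝓝[>] 1) (𝓝 (fejerMean w T y)) := by
  have h_one (n : ℕ) : LSeries.term (fun n ↦ (w n : ℂ)) 1 n * fejerKernel (T * (log n - y)) =
      ((w n / n * fejerKernel (T * (log n - y)) : ℝ) : ℂ) := by
    rcases eq_or_ne n 0 with rfl | hn
    · simp
    · simp [LSeries.term_of_ne_zero hn]
  rw [fejerMean, Complex.ofReal_tsum]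
  simp_rw [← h_one]
  refine tendsto_tsum_of_dominated_convergence
    ((hw.summable_abs_div_mul y).mul_left (1 + 4 / T ^ 2)) (fun n ↦ ?_) ?_
  · have h_cont : Continuous fun σ : ℝ ↦ LSeries.term (fun n ↦ (w n : ℂ)) σ n :=
      (continuous_iff_continuousAt.mpr fun s ↦ (LSeries.hasDerivAt_term
        (fun n ↦ (w n : ℂ)) n s).continuousAt).comp Complex.continuous_ofReal
    exact ((h_cont.tendsto' 1 _ (by simp)).mono_left nhdsWithin_le_nhds).mul_const _
  · filter_upwards [self_mem_nhdsWithin] with σ hσ n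
    calc ‖LSeries.term (fun n ↦ (w n : ℂ)) σ n * fejerKernel (T * (log n - y))‖
        ≤ ‖LSeries.term (fun n ↦ (w n : ℂ)) 1 n * fejerKernel (T * (log n - y))‖ := by
          rw [norm_mul, norm_mul]
          gcongr
          exact LSeries.norm_term_le_of_re_le_re _ (by simpa using (mem_Ioi.mp hσ).le) n
      _ ≤ _ := by
          rw [h_one, Complex.norm_real]
          exact abs_div_mul_fejerKernel_le w hT y n

lemma tendsto_integral_mul_comp_sub_mul_I {G : ℂ → ℂ} {k : ℝ → ℂ} (hk : Continuous k)
    (hG : ContinuousOn G {s | 1 ≤ s.re}) (T p q : ℝ) :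
    Tendsto (fun σ : ℝ ↦ ∫ t in p..q, k t * G (σ - (t * T : ℝ) * Complex.I)) (𝓝[>] 1)
      (𝓝 (∫ t in p..q, k t * G (1 - (t * T : ℝ) * Complex.I))) := by
  have h_cont : Continuous fun σ : ℝ ↦
      ∫ t in p..q, k t * G ((max 1 σ : ℝ) - (t * T : ℝ) * Complex.I) := by
    refine intervalIntegral.continuous_parametric_intervalIntegral_of_continuous' ?_ p q
    exact (hk.comp continuous_snd).mul (hG.comp_continuous (by fun_prop) fun z ↦ by simp)
  refine ((h_cont.tendsto' 1 _ (by simp)).mono_left nhdsWithin_le_nhds).congr' ?_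
  filter_upwards [self_mem_nhdsWithin] with σ hσ
  rw [max_eq_right (mem_Ioi.mp hσ).le]

lemma ofReal_fejerMean_eq_integral {w : ℕ → ℝ} (hw : HasBoundedMean w) {G : ℂ → ℂ}
    (hG : ContinuousOn G {s | 1 ≤ s.re})
    (hGw : ∀ s : ℂ, 1 < s.re → G s = LSeries (fun n ↦ (w n : ℂ)) s) {T : ℝ} (hT : 0 < T) (y : ℝ) :
    (fejerMean w T y : ℂ) =
      ∫ t in (-1 : ℝ)..1, ((1 - |t| : ℝ) : ℂ) * Complex.exp ((-(t * T * y) : ℝ) * Complex.I) *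
        G (1 - (t * T : ℝ) * Complex.I) := by
  refine tendsto_nhds_unique (hw.tendsto_tsum_term_mul_fejerKernel hT y)
    ((tendsto_integral_mul_comp_sub_mul_I (by fun_prop) hG T (-1) 1).congr' ?_)
  filter_upwards [self_mem_nhdsWithin] with σ hσ
  have h_re (t : ℝ) : 1 < ((σ : ℂ) - (t * T : ℝ) * Complex.I).re := by simpa using hσ
  simp_rw [hGw _ (h_re _)]
  exact (hasSum_term_mul_fejerKernel (hw.lseriesSummable (by simpa using hσ)) T y).tsum_eq.symm

theorem tendsto_fejerMean_zero {w : ℕ → ℝ} (hw : HasBoundedMean w) {G : ℂ → ℂ}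
    (hG : ContinuousOn G {s | 1 ≤ s.re})
    (hGw : ∀ s : ℂ, 1 < s.re → G s = LSeries (fun n ↦ (w n : ℂ)) s) {T : ℝ} (hT : 0 < T) :
    Tendsto (fejerMean w T) atTop (𝓝 0) := by
  have h_freq : Tendsto (fun y : ℝ ↦ T * y / (2 * π)) atTop (cocompact ℝ) :=
    ((tendsto_id.const_mul_atTop hT).atTop_div_const two_pi_pos).mono_right atTop_le_cocompact
  have h_lebesgue := (Real.tendsto_integral_exp_smul_cocompact ((Ioc (-1 : ℝ) 1).indicator
    fun t ↦ ((1 - |t| : ℝ) : ℂ) * G (1 - (t * T : ℝ) * Complex.I))).comp h_freq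
  rw [← tendsto_ofReal_iff]
  refine h_lebesgue.congr fun y ↦ ?_
  have h_phase (t : ℝ) : 2 * π * -(t * (T * y / (2 * π))) = -(t * T * y) := by field
  rw [ofReal_fejerMean_eq_integral hw hG hGw hT,
    intervalIntegral.integral_of_le (by norm_num),
    ← MeasureTheory.integral_indicator measurableSet_Ioc]
  refine MeasureTheory.integral_congr_ae (.of_forall fun t ↦ ?_)
  simp only [indicator_apply, Circle.smul_def, Real.fourierChar_apply, smul_eq_mul, h_phase]
  split_ifs <;> ring

lemma HasBoundedMean.fejerMean_sub_const {w : ℕ → ℝ} (hw : HasBoundedMean w) {T : ℝ} (hT : 0 < T)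
    (k y : ℝ) :
    fejerMean (fun n ↦ w n - k) T y = fejerMean w T y - k * fejerMean (fun _ ↦ 1) T y := by
  rw [fejerMean, fejerMean, fejerMean, ← tsum_mul_left,
    ← (hw.summable_div_mul_fejerKernel hT y).tsum_sub
      (((hasBoundedMean_const 1).summable_div_mul_fejerKernel hT y).mul_left k)]
  exact tsum_congr fun n ↦ by ring

lemma sub_sub_one_le_card_Ioc_floor {u v : ℝ} (hu : 0 ≤ u) (huv : u ≤ v) :
    v - u - 1 ≤ #(Finset.Ioc ⌊u⌋₊ ⌊v⌋₊) := by
  rw [Nat.card_Ioc, Nat.cast_sub (Nat.floor_mono huv)]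
  linarith [Nat.lt_floor_add_one v, Nat.floor_le hu]

lemma one_div_four_mul_exp_le_one_div_mul_fejerKernel {T y : ℝ} {n : ℕ} (hT : 1 ≤ T)
    (hyn : exp y ≤ n) (hny : n ≤ exp y * (1 + 1 / T)) :
    1 / (4 * exp y) ≤ 1 / n * fejerKernel (T * (log n - y)) := by
  have hT0 : 0 < T := by positivity
  have hn0 : 0 < (n : ℝ) := (exp_pos y).trans_le hyn
  have hn2 : (n : ℝ) ≤ 2 * exp y := by
    grw [hny, (div_le_one hT0).mpr hT]
    linarith
  have h_log_ge : y ≤ log n := (le_log_iff_exp_le hn0).mpr hyn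
  have h_log_le : log n - y ≤ 1 / T := by
    rw [← log_exp y, ← log_div hn0.ne' (exp_pos y).ne']
    have := log_le_sub_one_of_pos (div_pos hn0 (exp_pos y))
    have : n / exp y ≤ 1 + 1 / T := (div_le_iff₀' (exp_pos y)).mpr hny
    linarith
  have h_abs : |T * (log n - y)| ≤ 1 := by
    rw [abs_of_nonneg (mul_nonneg hT0.le (sub_nonneg.mpr h_log_ge))]
    exact (le_div_iff₀' hT0).mp h_log_le
  calc 1 / (4 * exp y) = 1 / (2 * exp y) * (1 / 2) := by field
    _ ≤ 1 / n * fejerKernel (T * (log n - y)) := by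
      gcongr
      exact half_le_fejerKernel h_abs

lemma eventually_le_fejerMean_one {T : ℝ} (hT : 1 ≤ T) :
    ∀ᶠ y in atTop, 1 / (8 * T) ≤ fejerMean (fun _ ↦ 1) T y := by
  have hT0 : 0 < T := by positivity
  filter_upwards [tendsto_exp_atTop.eventually_ge_atTop (2 * T)] with y hy
  set X := exp y
  have hX : 0 < X := exp_pos y
  set I := Finset.Ioc ⌊X⌋₊ ⌊X * (1 + 1 / T)⌋₊
  have h_term (n : ℕ) (hn : n ∈ I) :
      1 / (4 * X) ≤ 1 / n * fejerKernel (T * (log n - y)) := by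
    obtain ⟨hXn, hnX⟩ := Finset.mem_Ioc.mp hn
    exact one_div_four_mul_exp_le_one_div_mul_fejerKernel hT (Nat.lt_of_floor_lt hXn).le
      ((Nat.le_floor_iff (by positivity)).mp hnX)
  calc 1 / (8 * T) = (X / (2 * T)) * (1 / (4 * X)) := by field
    _ ≤ #I * (1 / (4 * X)) := by
      gcongr
      have h_card : X * (1 + 1 / T) - X - 1 ≤ #I := sub_sub_one_le_card_Ioc_floor hX.le
        (le_mul_of_one_le_right hX.le (by simp [hT0.le]))
      have h_one : 1 ≤ X / (2 * T) := (one_le_div (by positivity)).mpr hy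
      have h_eq : X * (1 + 1 / T) - X = X / (2 * T) + X / (2 * T) := by field
      linarith
    _ ≤ ∑ n ∈ I, 1 / (n : ℝ) * fejerKernel (T * (log n - y)) := by
      rw [← nsmul_eq_mul]
      exact Finset.card_nsmul_le_sum _ _ _ h_term
    _ ≤ fejerMean (fun _ ↦ 1) T y :=
      (hasBoundedMean_const 1).sum_le_fejerMean hT0 (fun _ ↦ zero_le_one) y I

lemma fejerKernel_mul_le_of_le_abs {T δ u : ℝ} (hT : 0 < T) (hδ : 0 < δ) (hu : δ ≤ |u|) :
    fejerKernel (T * u) ≤ 4 * (1 + 1 / δ ^ 2) / T ^ 2 * (1 + u ^ 2)⁻¹ := by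
  have h_far : 1 + u ^ 2 ≤ (1 + 1 / δ ^ 2) * u ^ 2 := by
    have : 1 ≤ u ^ 2 / δ ^ 2 := by
      rw [one_le_div (by positivity), ← sq_abs u]
      gcongr
    linarith [one_div_mul_eq_div (δ ^ 2) (u ^ 2)]
  rw [← div_eq_mul_inv, le_div_iff₀ (by positivity), le_div_iff₀ (by positivity)]
  calc fejerKernel (T * u) * (1 + u ^ 2) * T ^ 2
      ≤ fejerKernel (T * u) * ((1 + 1 / δ ^ 2) * u ^ 2) * T ^ 2 := by
        gcongr
        exact fejerKernel_nonneg _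
    _ = fejerKernel (T * u) * (T * u) ^ 2 * (1 + 1 / δ ^ 2) := by ring
    _ ≤ 4 * (1 + 1 / δ ^ 2) := by grw [fejerKernel_mul_sq_le_four]

lemma HasBoundedMean.exists_fejerMean_le_sum_add {w : ℕ → ℝ} (hw : HasBoundedMean w) (hw0 : 0 ≤ w)
    {δ : ℝ} (hδ : 0 < δ) :
    ∃ E : ℝ, ∀ T > 0, ∀ y, ∀ W : Finset ℕ, (∀ n : ℕ, n ≠ 0 → |log n - y| < δ → n ∈ W) →
      fejerMean w T y ≤ ∑ n ∈ W, w n / n + E / T ^ 2 := by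
  obtain ⟨B, hB⟩ := hw.exists_sum_le
  refine ⟨4 * (1 + 1 / δ ^ 2) * B, fun T hT y W hW ↦
    (hw.summable_div_mul_fejerKernel hT y).tsum_le_of_sum_le fun s ↦ ?_⟩
  have h_nonneg (n : ℕ) : 0 ≤ w n / n := div_nonneg (hw0 n) n.cast_nonneg
  have h_near : ∑ n ∈ s with n ∈ W, w n / n * fejerKernel (T * (log n - y)) ≤
      ∑ n ∈ W, w n / n :=
    calc ∑ n ∈ s with n ∈ W, w n / n * fejerKernel (T * (log n - y))
        ≤ ∑ n ∈ s with n ∈ W, w n / n := Finset.sum_le_sum fun n _ ↦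
          mul_le_of_le_one_right (h_nonneg n) (fejerKernel_le_one _)
      _ ≤ ∑ n ∈ W, w n / n := Finset.sum_le_sum_of_subset_of_nonneg
          (fun n hn ↦ (Finset.mem_filter.mp hn).2) fun n _ _ ↦ h_nonneg n
  have h_term (n : ℕ) (hn : n ∉ W) : w n / n * fejerKernel (T * (log n - y)) ≤
      4 * (1 + 1 / δ ^ 2) / T ^ 2 * (|w n| / n * (1 + (log n - y) ^ 2)⁻¹) := by
    rcases eq_or_ne n 0 with rfl | hn0
    · simp
    rw [abs_of_nonneg (hw0 n), mul_left_comm]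
    gcongr
    · exact h_nonneg n
    · exact fejerKernel_mul_le_of_le_abs hT hδ (not_lt.mp (mt (hW n hn0) hn))
  have h_far : ∑ n ∈ s with n ∉ W, w n / n * fejerKernel (T * (log n - y)) ≤
      4 * (1 + 1 / δ ^ 2) * B / T ^ 2 := by
    grw [Finset.sum_le_sum fun n hn ↦ h_term n (Finset.mem_filter.mp hn).2, ← Finset.mul_sum, hB,
      div_mul_eq_mul_div]
  rw [← Finset.sum_filter_add_sum_filter_not s (· ∈ W)]
  exact add_le_add h_near h_far

/-! ### Primes in arithmetic progressions -/

lemma continuous_update_riemannZeta_sub_one_div : Continuous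
    (Function.update (fun s : ℂ ↦ riemannZeta s - 1 / (s - 1)) 1 eulerMascheroniConstant) := by
  refine continuous_iff_continuousAt.mpr fun s ↦ ?_
  rcases eq_or_ne s 1 with rfl | hs
  · exact continuousAt_update_same.mpr tendsto_riemannZeta_sub_one_div
  · rw [continuousAt_update_of_ne hs]
    exact (differentiableAt_riemannZeta hs).continuousAt.sub
      (continuousAt_const.div (by fun_prop) (sub_ne_zero.mpr hs))

lemma hasBoundedMean_residueClass {q : ℕ} (a : ZMod q) : HasBoundedMean (residueClass a) := by
  refine ⟨log 4 + 4, fun N ↦ ?_⟩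
  calc ∑ n ∈ Finset.Icc 1 N, |residueClass a n|
      ≤ ∑ n ∈ Finset.Icc 1 N, vonMangoldt n := Finset.sum_le_sum fun n _ ↦ by
        rw [abs_of_nonneg (residueClass_nonneg a n)]
        exact residueClass_le a n
    _ = Chebyshev.psi N := by rw [Chebyshev.psi, Nat.floor_natCast]; rfl
    _ ≤ (log 4 + 4) * N := Chebyshev.psi_le_const_mul_self N.cast_nonneg

section ResidueClass

variable {q : ℕ} [NeZero q] {a : ZMod q} {T : ℝ}

lemma LSeries_residueClass_sub_const_eq (ha : IsUnit a) {s : ℂ} (hs : 1 < s.re) :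
    LFunctionResidueClassAux a s - (q.totient : ℂ)⁻¹ *
        Function.update (fun s : ℂ ↦ riemannZeta s - 1 / (s - 1)) 1 eulerMascheroniConstant s =
      LSeries (fun n ↦ ((residueClass a n - (q.totient : ℝ)⁻¹ : ℝ) : ℂ)) s := by
  have hs1 : s ≠ 1 := by
    rintro rfl
    simp at hs
  have h_split : (fun n ↦ ((residueClass a n - (q.totient : ℝ)⁻¹ : ℝ) : ℂ)) =
      (fun n ↦ (residueClass a n : ℂ)) - (q.totient : ℂ)⁻¹ • (1 : ℕ → ℂ) := by
    ext n
    simp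
  rw [h_split, LSeries_sub ((hasBoundedMean_residueClass a).lseriesSummable hs)
    ((LSeriesSummable_one_iff.mpr hs).smul _), LSeries_smul, LSeries_one_eq_riemannZeta hs,
    eqOn_LFunctionResidueClassAux ha hs, Function.update_of_ne hs1]
  ring

lemma tendsto_fejerMean_residueClass_sub (ha : IsUnit a) (hT : 0 < T) :
    Tendsto (fun y ↦ fejerMean (residueClass a) T y -
      (q.totient : ℝ)⁻¹ * fejerMean (fun _ ↦ 1) T y) atTop (𝓝 0) := by
  simp_rw [← (hasBoundedMean_residueClass a).fejerMean_sub_const hT]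
  refine tendsto_fejerMean_zero ((hasBoundedMean_residueClass a).sub (hasBoundedMean_const _))
    ?_ (fun s hs ↦ LSeries_residueClass_sub_const_eq ha hs) hT
  exact (continuousOn_LFunctionResidueClassAux a).sub
    (continuous_const.mul continuous_update_riemannZeta_sub_one_div).continuousOn

lemma eventually_le_fejerMean_residueClass (ha : IsUnit a) (hT : 1 ≤ T) :
    ∀ᶠ y in atTop, (q.totient : ℝ)⁻¹ / (16 * T) ≤ fejerMean (residueClass a) T y := by
  have hφ : 0 < (q.totient : ℝ)⁻¹ := by
    have := Nat.totient_pos.mpr (NeZero.pos q)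
    positivity
  have h_err := (tendsto_fejerMean_residueClass_sub ha (zero_lt_one.trans_le hT))
    |>.eventually_const_le (neg_lt_zero.mpr (by positivity : 0 < (q.totient : ℝ)⁻¹ / (16 * T)))
  filter_upwards [h_err, eventually_le_fejerMean_one hT] with y h_err h_main
  have h_half : (q.totient : ℝ)⁻¹ * (1 / (8 * T)) = 2 * ((q.totient : ℝ)⁻¹ / (16 * T)) := by field
  linarith [mul_le_mul_of_nonneg_left h_main hφ.le]

end ResidueClass

lemma exists_eventually_fejerMean_residueClass_le {T : ℝ} (hT : 0 < T) :
    ∃ B > 0, ∀ (q : ℕ) [NeZero q] (a : ZMod q), IsUnit a →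
      ∀ᶠ y in atTop, fejerMean (residueClass a) T y ≤ B * (q.totient : ℝ)⁻¹ := by
  obtain ⟨B, hB⟩ := (hasBoundedMean_const 1).exists_fejerMean_le hT
  refine ⟨max B 0 + 1, by positivity, fun q _ a ha ↦ ?_⟩
  have hφ : 0 < (q.totient : ℝ)⁻¹ := by
    have := Nat.totient_pos.mpr (NeZero.pos q)
    positivity
  filter_upwards [(tendsto_fejerMean_residueClass_sub ha hT).eventually_le_const hφ] with y hy
  have : (q.totient : ℝ)⁻¹ * fejerMean (fun _ ↦ 1) T y ≤ (q.totient : ℝ)⁻¹ * max B 0 :=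
    mul_le_mul_of_nonneg_left ((hB y).trans (le_max_left _ _)) hφ.le
  linarith

lemma mem_Icc_ceil_floor {u v : ℝ} (hv : 0 ≤ v) {n : ℕ} :
    n ∈ Finset.Icc ⌈u⌉₊ ⌊v⌋₊ ↔ u ≤ n ∧ n ≤ v := by
  rw [Finset.mem_Icc, Nat.ceil_le, Nat.le_floor_iff hv]

lemma tendsto_log_add_atTop (c : ℝ) : Tendsto (fun X ↦ log X + c) atTop atTop :=
  tendsto_atTop_add_const_right _ _ tendsto_log_atTop

section Window

variable {r : ℝ}

lemma abs_log_sub_le_iff_mem_Icc (hr : 0 < r) {X : ℝ} (hX : 0 < X) {n : ℕ} (hn : n ≠ 0) :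
    |log n - (log X + log r / 2)| ≤ -log r / 2 ↔ n ∈ Finset.Icc ⌈r * X⌉₊ ⌊X⌋₊ := by
  have hn0 : (0 : ℝ) < n := by positivity
  rw [mem_Icc_ceil_floor hX.le, ← log_le_log_iff (by positivity) hn0, ← log_le_log_iff hn0 hX,
    log_mul hr.ne' hX.ne', abs_le]
  constructor <;> rintro ⟨h_lower, h_upper⟩ <;> constructor <;> linarith

lemma exists_mul_le_sum_residueClass (hr : 0 < r) (hr1 : r < 1) {q : ℕ} [NeZero q] {a : ZMod q}
    (ha : IsUnit a) :
    ∃ c > 0, ∀ᶠ X : ℝ in atTop,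
      c * X ≤ ∑ n ∈ Finset.Icc ⌈r * X⌉₊ ⌊X⌋₊, residueClass a n := by
  have hδ : 0 < -log r / 2 := by linarith [log_neg hr hr1]
  have hφ : 0 < (q.totient : ℝ)⁻¹ := by
    have := Nat.totient_pos.mpr (NeZero.pos q)
    positivity
  obtain ⟨E, hE⟩ := (hasBoundedMean_residueClass a).exists_fejerMean_le_sum_add
    (residueClass_nonneg a) hδ
  obtain ⟨T, hT1, hET⟩ : ∃ T ≥ (1 : ℝ), 32 * E * q.totient ≤ T :=
    ⟨_, le_max_left _ _, le_max_right _ _⟩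
  have h_err : E / T ^ 2 ≤ (q.totient : ℝ)⁻¹ / (32 * T) := by
    have hET' : 32 * E ≤ (q.totient : ℝ)⁻¹ * T := by
      rwa [inv_mul_eq_div, le_div_iff₀ (inv_pos.mp hφ)]
    rw [div_le_div_iff₀ (by positivity) (by positivity)]
    nlinarith
  refine ⟨r * ((q.totient : ℝ)⁻¹ / (32 * T)), by positivity, ?_⟩
  filter_upwards [(tendsto_log_add_atTop (log r / 2)).eventually
    (eventually_le_fejerMean_residueClass ha hT1), eventually_gt_atTop 0] with X h_mean hX
  set W := Finset.Icc ⌈r * X⌉₊ ⌊X⌋₊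
  have h_sum : (q.totient : ℝ)⁻¹ / (32 * T) ≤ ∑ n ∈ W, residueClass a n / n := by
    have h_window := hE T (by positivity) _ W fun n hn h ↦
      (abs_log_sub_le_iff_mem_Icc hr hX hn).mp h.le
    have h_half : (q.totient : ℝ)⁻¹ / (16 * T) = 2 * ((q.totient : ℝ)⁻¹ / (32 * T)) := by field
    linarith
  calc r * ((q.totient : ℝ)⁻¹ / (32 * T)) * X
      ≤ r * X * ∑ n ∈ W, residueClass a n / n := by
        rw [mul_right_comm]
        gcongr
    _ ≤ ∑ n ∈ W, residueClass a n := by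
        rw [Finset.mul_sum]
        refine Finset.sum_le_sum fun n hn ↦ ?_
        have hn' := ((mem_Icc_ceil_floor hX.le).mp hn).1
        rw [mul_div_left_comm]
        exact mul_le_of_le_one_right (residueClass_nonneg a n)
          (div_le_one_of_le₀ hn' n.cast_nonneg)

lemma exists_eventually_sum_residueClass_le (hr : 0 < r) (hr1 : r < 1) :
    ∃ B > 0, ∀ (q : ℕ) [NeZero q] (a : ZMod q), IsUnit a → ∀ᶠ X : ℝ in atTop,
      ∑ n ∈ Finset.Icc ⌈r * X⌉₊ ⌊X⌋₊, residueClass a n ≤ B * (q.totient : ℝ)⁻¹ * X := by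
  have hδ : 0 < -log r / 2 := by linarith [log_neg hr hr1]
  obtain ⟨B, hB, h_mean⟩ := exists_eventually_fejerMean_residueClass_le (inv_pos.mpr hδ)
  refine ⟨2 * B, by positivity, fun q _ a ha ↦ ?_⟩
  filter_upwards [(tendsto_log_add_atTop (log r / 2)).eventually (h_mean q a ha),
    eventually_gt_atTop 0] with X h_mean hX
  set W := Finset.Icc ⌈r * X⌉₊ ⌊X⌋₊
  set K := fun n : ℕ ↦ fejerKernel ((-log r / 2)⁻¹ * (log n - (log X + log r / 2)))
  have h_term (n : ℕ) (hn : n ∈ W) :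
      residueClass a n ≤ 2 * X * (residueClass a n / n * K n) := by
    obtain ⟨hrn, hnX⟩ := (mem_Icc_ceil_floor hX.le).mp hn
    have hn0 : (0 : ℝ) < n := (by positivity : 0 < r * X).trans_le hrn
    have hK : 1 / 2 ≤ K n := half_le_fejerKernel <| by
      rw [abs_mul, abs_of_pos (inv_pos.mpr hδ), inv_mul_le_one₀ hδ]
      exact (abs_log_sub_le_iff_mem_Icc hr hX (Nat.cast_pos.mp hn0).ne').mpr hn
    calc residueClass a n = residueClass a n * (n / n * (2 * (1 / 2))) := by field
      _ ≤ residueClass a n * (X / n * (2 * K n)) := by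
        gcongr
        exact residueClass_nonneg a n
      _ = 2 * X * (residueClass a n / n * K n) := by ring
  calc ∑ n ∈ W, residueClass a n
      ≤ 2 * X * ∑ n ∈ W, residueClass a n / n * K n := by
        rw [Finset.mul_sum]
        exact Finset.sum_le_sum h_term
    _ ≤ 2 * X * (B * (q.totient : ℝ)⁻¹) := by
        grw [(hasBoundedMean_residueClass a).sum_le_fejerMean (inv_pos.mpr hδ)
          (residueClass_nonneg a), h_mean]
    _ = 2 * B * (q.totient : ℝ)⁻¹ * X := by ring

end Window

lemma sum_residueClass_le_card_mul_log_add {q : ℕ} (a : ZMod q) {u X : ℝ} (hu : 0 < u)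
    (hX : 0 ≤ X) :
    ∑ n ∈ Finset.Icc ⌈u⌉₊ ⌊X⌋₊, residueClass a n ≤
      #{p ∈ Finset.Icc ⌈u⌉₊ ⌊X⌋₊ | p.Prime ∧ ((p : ℕ) : ZMod q) = a} * log X +
        (Chebyshev.psi X - Chebyshev.theta X) := by
  set W := Finset.Icc ⌈u⌉₊ ⌊X⌋₊
  have h_primes : ∑ n ∈ W with n.Prime, residueClass a n ≤
      #{p ∈ W | p.Prime ∧ ((p : ℕ) : ZMod q) = a} * log X := by
    simp only [residueClass, indicator_apply, mem_ofPred_eq]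
    rw [← Finset.sum_filter, Finset.filter_filter, ← nsmul_eq_mul]
    refine Finset.sum_le_card_nsmul _ _ _ fun p hp ↦ ?_
    obtain ⟨hpW, hp, -⟩ := Finset.mem_filter.mp hp
    rw [vonMangoldt_apply_prime hp]
    exact log_le_log (by exact_mod_cast hp.pos) ((mem_Icc_ceil_floor hX).mp hpW).2
  have h_powers : ∑ n ∈ W with ¬n.Prime, residueClass a n ≤
      Chebyshev.psi X - Chebyshev.theta X := by
    rw [Chebyshev.psi_sub_theta_eq_sum_not_prime]
    refine (Finset.sum_le_sum fun n _ ↦ residueClass_le a n).trans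
      (Finset.sum_le_sum_of_subset_of_nonneg ?_ fun n _ _ ↦ vonMangoldt_nonneg)
    refine Finset.filter_subset_filter _ fun n hn ↦ ?_
    obtain ⟨hun, hnX⟩ := Finset.mem_Icc.mp hn
    exact Finset.mem_Ioc.mpr ⟨(Nat.ceil_pos.mpr hu).trans_le hun, hnX⟩
  rw [← Finset.sum_filter_add_sum_filter_not W Nat.Prime]
  exact add_le_add h_primes h_powers

lemma isLittleO_sqrt_self : sqrt =o[atTop] fun X : ℝ ↦ X := by
  refine isLittleO_of_tendsto (fun X hX ↦ by rw [hX, sqrt_zero]) ?_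
  simp_rw [sqrt_div_self]
  exact tendsto_inv_atTop_zero.comp tendsto_sqrt_atTop

theorem exists_mul_le_card_primes_residueClass {r : ℝ} (hr : 0 < r) (hr1 : r < 1) {q : ℕ}
    [NeZero q] {a : ZMod q} (ha : IsUnit a) :
    ∃ c > 0, ∀ᶠ X : ℝ in atTop, c * (X / log X) ≤
      #{p ∈ Finset.Icc ⌈r * X⌉₊ ⌊X⌋₊ | p.Prime ∧ ((p : ℕ) : ZMod q) = a} := by
  obtain ⟨c, hc, h_sum⟩ := exists_mul_le_sum_residueClass hr hr1 ha
  have h_powers : (Chebyshev.psi - Chebyshev.theta) =o[atTop] fun X : ℝ ↦ X :=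
    Chebyshev.isBigO_psi_sub_theta_sqrt.trans_isLittleO isLittleO_sqrt_self
  refine ⟨c / 2, by positivity, ?_⟩
  filter_upwards [h_sum, h_powers.bound (half_pos hc), eventually_gt_atTop 1]
    with X h_sum h_powers hX
  have h_split := sum_residueClass_le_card_mul_log_add a (u := r * X) (X := X) (by positivity)
    (by positivity)
  rw [Pi.sub_apply, norm_eq_abs, norm_of_nonneg (by positivity)] at h_powers
  rw [← mul_div_assoc, div_le_iff₀ (log_pos hX)]
  linarith [(abs_le.mp h_powers).2]

/-! ### Residue classes admitting prime pairs -/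

/-- The residue classes modulo `Q` that contain integers `m` with both `m` and `m + h` coprime
to `Q`; all but finitely many prime pairs of difference `h` start in one of them. -/
def admissibleResidues (h : ℤ) (Q : ℕ) : Set (ZMod Q) :=
  {a | IsUnit a ∧ IsUnit (a + h)}

lemma ncard_admissibleResidues_mul (h : ℤ) {m n : ℕ} (hmn : m.Coprime n) :
    (admissibleResidues h (m * n)).ncard =
      (admissibleResidues h m).ncard * (admissibleResidues h n).ncard := by
  let e := ZMod.chineseRemainder hmn
  have h_preimage :
      e ⁻¹' (admissibleResidues h m ×ˢ admissibleResidues h n) = admissibleResidues h (m * n) := by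
    ext a
    simp only [admissibleResidues, mem_preimage, mem_prod, mem_ofPred_eq]
    rw [← MulEquiv.isUnit_map e, ← MulEquiv.isUnit_map e (x := a + h), map_add, map_intCast,
      Prod.isUnit_iff, Prod.isUnit_iff]
    exact and_and_and_comm
  rw [← h_preimage, ncard_preimage_of_injective_subset_range e.injective (by simp), ncard_prod]

lemma ncard_admissibleResidues_prime {h : ℤ} {p : ℕ} (hp : p.Prime) (hph : ¬(p : ℤ) ∣ h) :
    (admissibleResidues h p).ncard = p - 2 := by
  have := Fact.mk hp
  have h_ne : (0 : ZMod p) ≠ -h := by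
    rwa [ne_comm, neg_ne_zero, Ne, ZMod.intCast_zmod_eq_zero_iff_dvd]
  have h_compl : admissibleResidues h p = {0, -(h : ZMod p)}ᶜ := by
    ext a
    simp [admissibleResidues, add_eq_zero_iff_eq_neg]
  rw [h_compl, ncard_compl, ncard_pair h_ne, Nat.card_zmod]

lemma sub_two_le_exp_neg_inv_mul {x : ℝ} (hx : 1 ≤ x) : x - 2 ≤ exp (-(1 / x)) * (x - 1) := by
  calc x - 2 ≤ (-(1 / x) + 1) * (x - 1) := by
        have h_eq : (-(1 / x) + 1) * (x - 1) = x - 2 + 1 / x := by field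
        have h_pos : 0 < 1 / x := by positivity
        linarith
    _ ≤ exp (-(1 / x)) * (x - 1) :=
        mul_le_mul_of_nonneg_right (add_one_le_exp _) (sub_nonneg.mpr hx)

lemma ncard_admissibleResidues_prod_le {h : ℤ} {s : Finset ℕ}
    (hs : ∀ p ∈ s, p.Prime ∧ ¬(p : ℤ) ∣ h) :
    ((admissibleResidues h (∏ p ∈ s, p)).ncard : ℝ) ≤
      exp (-∑ p ∈ s, 1 / (p : ℝ)) * (∏ p ∈ s, p).totient := by
  induction s using Finset.induction_on with
  | empty => simpa using ncard_le_one_of_subsingleton (admissibleResidues h 1)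
  | insert p s hps ih =>
    have hs' (q : ℕ) (hq : q ∈ s) := hs q (Finset.mem_insert_of_mem hq)
    obtain ⟨hp, hph⟩ := hs p (Finset.mem_insert_self p s)
    have h_coprime : p.Coprime (∏ q ∈ s, q) := Nat.Coprime.prod_right fun q hq ↦
      (Nat.coprime_primes hp (hs' q hq).1).mpr fun hpq ↦ hps (hpq ▸ hq)
    have hp1 : (1 : ℝ) ≤ p := by exact_mod_cast hp.one_le
    rw [Finset.prod_insert hps, Finset.sum_insert hps, ncard_admissibleResidues_mul h h_coprime,
      Nat.totient_mul h_coprime, Nat.totient_prime hp, ncard_admissibleResidues_prime hp hph,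
      neg_add, exp_add]
    push_cast [hp.two_le, hp.one_le]
    rw [mul_mul_mul_comm]
    exact mul_le_mul (sub_two_le_exp_neg_inv_mul hp1) (ih hs') (by positivity)
      (mul_nonneg (exp_pos _).le (sub_nonneg.mpr hp1))

lemma exists_primes_not_dvd_le_sum_one_div {h : ℤ} (hh : h ≠ 0) (M : ℝ) :
    ∃ s : Finset ℕ, (∀ p ∈ s, p.Prime ∧ ¬(p : ℤ) ∣ h) ∧ M ≤ ∑ p ∈ s, 1 / (p : ℝ) := by
  have h_cofinite : indicator {p : ℕ | p.Prime ∧ ¬(p : ℤ) ∣ h} (fun n ↦ 1 / (n : ℝ)) =ᶠ[cofinite]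
      indicator {p : ℕ | p.Prime} (fun n ↦ 1 / (n : ℝ)) := by
    filter_upwards [h.natAbs.divisors.finite_toSet.compl_mem_cofinite] with p hp
    have hph : ¬(p : ℤ) ∣ h := by simpa [hh, Int.natCast_dvd] using hp
    simp [indicator_apply, hph]
  have h_not_summable := (summable_congr_cofinite h_cofinite).not.mpr not_summable_one_div_on_primes
  by_contra! h_lt
  refine h_not_summable (summable_of_sum_le (c := M) (fun n ↦ ?_) fun u ↦ ?_)
  · exact indicator_nonneg (fun _ _ ↦ by positivity) n
  · classical
    rw [Finset.sum_indicator_eq_sum_filter]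
    exact (h_lt _ fun p hp ↦ (Finset.mem_filter.mp hp).2).le

lemma exists_ncard_admissibleResidues_le {h : ℤ} (hh : h ≠ 0) {ε : ℝ} (hε : 0 < ε) :
    ∃ Q : ℕ, Q ≠ 0 ∧ ((admissibleResidues h Q).ncard : ℝ) ≤ ε * Q.totient := by
  obtain ⟨s, hs, h_sum⟩ := exists_primes_not_dvd_le_sum_one_div hh (-log ε)
  refine ⟨∏ p ∈ s, p, Finset.prod_ne_zero_iff.mpr fun p hp ↦ (hs p hp).1.ne_zero, ?_⟩
  grw [ncard_admissibleResidues_prod_le hs, neg_le.mp h_sum, exp_log hε]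

/-! ### Prime pairs -/

/-- The primes `p ≤ X` for which `p + h` is also prime up to sign. -/
noncomputable def primePairs (h : ℤ) (X : ℝ) : Finset ℕ :=
  {p ∈ Finset.Icc 1 ⌊X⌋₊ | p.Prime ∧ ((p : ℤ) + h).natAbs.Prime}

lemma mem_primePairs {h : ℤ} {X : ℝ} {p : ℕ} :
    p ∈ primePairs h X ↔ (p : ℝ) ≤ X ∧ p.Prime ∧ ((p : ℤ) + h).natAbs.Prime := by
  rw [primePairs, Finset.mem_filter, Finset.mem_Icc, and_congr_left_iff]
  rintro ⟨hp, -⟩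
  rw [Nat.le_floor_iff' hp.ne_zero, and_iff_right hp.one_le]

lemma isUnit_intCast_of_natAbs_prime {Q : ℕ} (hQ : Q ≠ 0) {z : ℤ} (hz : z.natAbs.Prime)
    (hQz : Q < z.natAbs) : IsUnit (z : ZMod Q) := by
  rw [ZMod.coe_int_isUnit_iff_isCoprime, Int.isCoprime_iff_gcd_eq_one]
  exact (Nat.coprime_of_lt_prime hQ hQz hz).symm

lemma natCast_mem_admissibleResidues {h : ℤ} {X : ℝ} {p Q : ℕ} (hQ : Q ≠ 0)
    (hp : p ∈ primePairs h X) (hQp : Q + h.natAbs < p) :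
    (p : ZMod Q) ∈ admissibleResidues h Q := by
  obtain ⟨-, hp, hph⟩ := mem_primePairs.mp hp
  exact ⟨by simpa using isUnit_intCast_of_natAbs_prime (z := p) hQ hp (by simp; omega),
    by simpa using isUnit_intCast_of_natAbs_prime hQ hph (by omega)⟩

lemma sum_log_primePairs_le_sum_residueClass {h : ℤ} {X u : ℝ} {Q : ℕ} [NeZero Q] (hX : 0 ≤ X)
    (hu : Q + h.natAbs < u) :
    ∑ p ∈ primePairs h X with u ≤ (p : ℕ), log p ≤
      ∑ a ∈ (toFinite (admissibleResidues h Q)).toFinset,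
        ∑ n ∈ Finset.Icc ⌈u⌉₊ ⌊X⌋₊, residueClass a n := by
  rw [← Finset.sum_fiberwise_of_maps_to (g := fun p : ℕ ↦ (p : ZMod Q))
    (t := (toFinite (admissibleResidues h Q)).toFinset) fun p hp ↦ ?_]
  · refine Finset.sum_le_sum fun a _ ↦ ?_
    calc ∑ p ∈ {p ∈ primePairs h X | u ≤ (p : ℕ)} with ((p : ℕ) : ZMod Q) = a, log p
        = ∑ p ∈ {p ∈ primePairs h X | u ≤ (p : ℕ)} with ((p : ℕ) : ZMod Q) = a,
            residueClass a p := by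
          refine Finset.sum_congr rfl fun p hp ↦ ?_
          simp only [Finset.mem_filter, mem_primePairs] at hp
          rw [residueClass, indicator_of_mem (by exact hp.2), vonMangoldt_apply_prime hp.1.1.2.1]
      _ ≤ ∑ n ∈ Finset.Icc ⌈u⌉₊ ⌊X⌋₊, residueClass a n := by
          refine Finset.sum_le_sum_of_subset_of_nonneg (fun p hp ↦ ?_)
            fun n _ _ ↦ residueClass_nonneg a n
          simp only [Finset.mem_filter, mem_primePairs] at hp
          exact (mem_Icc_ceil_floor hX).mpr ⟨hp.1.2, hp.1.1.1⟩
  · obtain ⟨hp, hup⟩ := Finset.mem_filter.mp hp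
    refine (Finite.mem_toFinset _).mpr (natCast_mem_admissibleResidues (NeZero.ne Q) hp ?_)
    exact_mod_cast hu.trans_le hup

lemma eventually_sum_log_primePairs_window_le {h : ℤ} (hh : h ≠ 0) {r : ℝ} (hr : 0 < r)
    (hr1 : r < 1) {ε : ℝ} (hε : 0 < ε) :
    ∀ᶠ X : ℝ in atTop, ∑ p ∈ primePairs h X with r * X ≤ (p : ℕ), log p ≤ ε * X := by
  obtain ⟨B, hB, h_class⟩ := exists_eventually_sum_residueClass_le hr hr1
  obtain ⟨Q, hQ, hQ_card⟩ := exists_ncard_admissibleResidues_le hh (div_pos hε hB)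
  have : NeZero Q := ⟨hQ⟩
  have : 0 < (Q.totient : ℝ) := by exact_mod_cast Nat.totient_pos.mpr (NeZero.pos Q)
  set A := (toFinite (admissibleResidues h Q)).toFinset with hA
  have hA_card : (#A : ℝ) ≤ ε / B * Q.totient := by
    rwa [hA, ← ncard_eq_toFinset_card]
  have h_classes := (Filter.eventually_all_finset A).mpr fun a ha ↦
    h_class Q a ((Finite.mem_toFinset _).mp ha).1
  filter_upwards [h_classes, eventually_ge_atTop 0,
    (tendsto_id.const_mul_atTop hr).eventually_gt_atTop ((Q : ℝ) + h.natAbs)]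
    with X h_classes hX hrX
  calc ∑ p ∈ primePairs h X with r * X ≤ (p : ℕ), log p
      ≤ ∑ a ∈ A, ∑ n ∈ Finset.Icc ⌈r * X⌉₊ ⌊X⌋₊, residueClass a n :=
        sum_log_primePairs_le_sum_residueClass hX hrX
    _ ≤ #A * (B * (Q.totient : ℝ)⁻¹ * X) := by
        rw [← nsmul_eq_mul]
        exact Finset.sum_le_card_nsmul _ _ _ h_classes
    _ ≤ ε / B * Q.totient * (B * (Q.totient : ℝ)⁻¹ * X) := by gcongr
    _ = ε * X := by field

lemma sum_log_primePairs_lt_le (h : ℤ) {X u : ℝ} (hu : 0 ≤ u) :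
    ∑ p ∈ primePairs h X with ¬u ≤ (p : ℕ), log p ≤ log 4 * u := by
  refine le_trans ?_ (Chebyshev.theta_le_log4_mul_x hu)
  rw [Chebyshev.theta]
  refine Finset.sum_le_sum_of_subset_of_nonneg (fun p hp ↦ ?_) fun p _ _ ↦ log_natCast_nonneg p
  obtain ⟨hp, hpu⟩ := Finset.mem_filter.mp hp
  obtain ⟨-, hp, -⟩ := mem_primePairs.mp hp
  exact Finset.mem_filter.mpr
    ⟨Finset.mem_Ioc.mpr ⟨hp.pos, Nat.le_floor (not_le.mp hpu).le⟩, hp⟩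

lemma isLittleO_sum_log_primePairs {h : ℤ} (hh : h ≠ 0) :
    (fun X ↦ ∑ p ∈ primePairs h X, log p) =o[atTop] fun X ↦ X := by
  refine isLittleO_iff.mpr fun ε hε ↦ ?_
  obtain ⟨r, hr, hr_lt⟩ : ∃ r > 0, r < min 1 (ε / (2 * log 4)) :=
    exists_between (by have := log_pos (by norm_num : (1 : ℝ) < 4); positivity)
  obtain ⟨hr1, hrε⟩ := lt_min_iff.mp hr_lt
  rw [lt_div_iff₀ (by have := log_pos (by norm_num : (1 : ℝ) < 4); positivity)] at hrε
  filter_upwards [eventually_sum_log_primePairs_window_le hh hr hr1 (half_pos hε),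
    eventually_ge_atTop 0] with X h_window hX
  rw [norm_of_nonneg (Finset.sum_nonneg fun p _ ↦ log_natCast_nonneg p), norm_of_nonneg hX,
    ← Finset.sum_filter_add_sum_filter_not (primePairs h X) (fun p ↦ r * X ≤ (p : ℕ))]
  nlinarith [sum_log_primePairs_lt_le h (X := X) (by positivity : 0 ≤ r * X)]

lemma isLittleO_sqrt_div_log : sqrt =o[atTop] fun X ↦ X / log X := by
  have h_log : (fun X ↦ log X) =o[atTop] sqrt := by
    simpa only [← sqrt_eq_rpow] using isLittleO_log_rpow_atTop (by norm_num : (0 : ℝ) < 1 / 2)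
  have h_mul : (fun X ↦ log X * (√X / log X)) =o[atTop] fun X ↦ √X * (√X / log X) :=
    h_log.mul_isBigO (isBigO_refl _ _)
  refine h_mul.congr' ?_ ?_
  · filter_upwards [eventually_gt_atTop 1] with X hX
    exact mul_div_cancel₀ _ (log_pos hX).ne'
  · filter_upwards [eventually_ge_atTop 0] with X hX
    rw [← mul_div_assoc, mul_self_sqrt hX]

lemma card_primePairs_le (h : ℤ) {X : ℝ} (hX : 1 < X) :
    (#(primePairs h X) : ℝ) ≤ √X + 2 * ((∑ p ∈ primePairs h X, log p) * (log X)⁻¹) := by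
  have h_log : 0 < log X := log_pos hX
  have h_small : (#{p ∈ primePairs h X | ¬√X < (p : ℕ)} : ℝ) ≤ √X := by
    refine le_trans ?_ (Nat.floor_le (sqrt_nonneg X))
    rw [← Nat.add_sub_cancel (n := ⌊√X⌋₊) (m := 1), ← Nat.card_Icc]
    gcongr
    intro p hp
    obtain ⟨hp, hpX⟩ := Finset.mem_filter.mp hp
    exact Finset.mem_Icc.mpr ⟨(mem_primePairs.mp hp).2.1.one_le, Nat.le_floor (not_lt.mp hpX)⟩
  have h_large : #{p ∈ primePairs h X | √X < (p : ℕ)} * (log X / 2) ≤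
      ∑ p ∈ primePairs h X, log p := by
    rw [← nsmul_eq_mul]
    refine (Finset.card_nsmul_le_sum _ (fun p : ℕ ↦ log p) _ fun p hp ↦ ?_).trans
      (Finset.sum_le_sum_of_subset_of_nonneg (Finset.filter_subset _ _)
        fun p _ _ ↦ log_natCast_nonneg p)
    rw [← log_sqrt (by linarith)]
    exact log_le_log (by positivity) (Finset.mem_filter.mp hp).2.le
  rw [← Finset.card_filter_add_card_filter_not (fun p : ℕ ↦ √X < p), Nat.cast_add, add_comm]
  refine add_le_add h_small ?_
  rw [← div_eq_mul_inv, ← mul_div_assoc, le_div_iff₀ h_log]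
  linarith

theorem isLittleO_card_primePairs {h : ℤ} (hh : h ≠ 0) :
    (fun X ↦ (#(primePairs h X) : ℝ)) =o[atTop] fun X ↦ X / log X := by
  have h_sum := (isLittleO_sum_log_primePairs hh).mul_isBigO
    (isBigO_refl (fun X ↦ (log X)⁻¹) atTop)
  refine IsBigO.trans_isLittleO (.of_norm_eventuallyLE ?_)
    (isLittleO_sqrt_div_log.add (h_sum.const_mul_left 2))
  filter_upwards [eventually_gt_atTop 1] with X hX
  simpa using card_primePairs_le h hX

/-! ### Autocorrelations of sets of integers -/

lemma sum_sum_sub_eq_sum_card_nsmul {G M : Type*} [AddCommGroup G] [DecidableEq G]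
    [AddCommMonoid M] {f : G → M} {H : Finset G} (hf : ∀ h ∉ H, f h = 0) (Z : Finset G) :
    ∑ m ∈ Z, ∑ k ∈ Z, f (m - k) = ∑ h ∈ H, #{k ∈ Z | k + h ∈ Z} • f h := by
  have h_inner (k : G) : ∑ m ∈ Z, f (m - k) = ∑ h ∈ H with k + h ∈ Z, f h := by
    rw [← Finset.sum_filter_of_ne (p := fun m ↦ m - k ∈ H)
      fun m _ hm ↦ not_imp_comm.mp (hf (m - k)) hm]
    refine Finset.sum_nbij' (· - k) (k + ·) ?_ ?_ ?_ ?_ ?_ <;> simp +contextual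
  rw [Finset.sum_comm]
  simp_rw [h_inner, Finset.sum_filter]
  rw [Finset.sum_comm]
  simp_rw [← Finset.sum_filter, Finset.sum_const]

lemma autoCorr_image_intCast (Z : Finset ℤ) {f : ℝ → ℂ} {H : Finset ℤ}
    (hf : ∀ h ∉ H, f (h : ℤ) = 0) :
    autoCorr ((↑) '' (Z : Set ℤ)) f =
      ∑ h ∈ H, ((#{m ∈ Z | m + h ∈ Z} / #Z : ℝ) : ℂ) * f (h : ℤ) := by
  have h_inj : InjOn ((↑) : ℤ → ℝ) (Z : Set ℤ) := Int.cast_injective.injOn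
  rw [autoCorr, ncard_image_of_injective _ Int.cast_injective, ncard_coe_finset]
  simp_rw [finsum_mem_image h_inj, finsum_mem_coe_finset, ← Int.cast_sub]
  rw [sum_sum_sub_eq_sum_card_nsmul hf, Finset.mul_sum]
  refine Finset.sum_congr rfl fun h _ ↦ ?_
  push_cast
  rw [nsmul_eq_mul]
  ring

theorem tendsto_autoCorr_image_intCast {ι : Type*} {l : Filter ι} {F : ι → Finset ℤ}
    (hF : ∀ᶠ i in l, (F i).Nonempty)
    (h_coincidence : ∀ h : ℤ, h ≠ 0 →
      Tendsto (fun i ↦ (#{m ∈ F i | m + h ∈ F i} / #(F i) : ℝ)) l (𝓝 0))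
    {f : ℝ → ℂ} (hf : HasCompactSupport f) :
    Tendsto (fun i ↦ autoCorr ((↑) '' (F i : Set ℤ)) f) l (𝓝 (f 0)) := by
  have hf_finite : (Function.support (f ∘ ((↑) : ℤ → ℝ))).Finite :=
    (hf.comp_isClosedEmbedding Int.isClosedEmbedding_coe_real).isCompact.finite_of_discrete.subset
      (subset_tsupport _)
  have hf_zero (h : ℤ) (hh : h ∉ hf_finite.toFinset) : f h = 0 := by simpa using hh
  have h_density (h : ℤ) : Tendsto (fun i ↦ (#{m ∈ F i | m + h ∈ F i} / #(F i) : ℝ)) l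
      (𝓝 (if h = 0 then 1 else 0)) := by
    split_ifs with hh
    · refine tendsto_const_nhds.congr' ?_
      filter_upwards [hF] with i hi
      simp [hh, hi.ne_empty]
    · exact h_coincidence h hh
  have h_limit : ∑ h ∈ hf_finite.toFinset, ((if h = 0 then 1 else 0 : ℝ) : ℂ) * f h = f 0 := by
    simp [apply_ite Complex.ofReal, eq_comm]
  simp_rw [autoCorr_image_intCast _ hf_zero]
  rw [← h_limit]
  exact tendsto_finsetSum _ fun h _ ↦ (h_density h).ofReal.mul_const (f h)

/-! ### The signed primes in an interval -/

/-- The primes and negatives of primes in `[a, b]`, that is `PrimesR ∩ [a, b]` as a finite set of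
integers. -/
noncomputable def signedPrimes (a b : ℝ) : Finset ℤ :=
  {m ∈ Finset.Icc ⌈a⌉ ⌊b⌋ | m.natAbs.Prime}

lemma mem_signedPrimes {a b : ℝ} {m : ℤ} :
    m ∈ signedPrimes a b ↔ (a ≤ m ∧ m ≤ b) ∧ m.natAbs.Prime := by
  simp [signedPrimes, Int.ceil_le, Int.le_floor]

lemma neg_mem_signedPrimes {a b : ℝ} {m : ℤ} :
    -m ∈ signedPrimes a b ↔ m ∈ signedPrimes (-b) (-a) := by
  simp only [mem_signedPrimes, Int.natAbs_neg, Int.cast_neg, le_neg, neg_le, and_comm]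

lemma card_signedPrimes_neg (a b : ℝ) : #(signedPrimes (-b) (-a)) = #(signedPrimes a b) :=
  Finset.card_bij' (fun m _ ↦ -m) (fun m _ ↦ -m) (fun _ ↦ neg_mem_signedPrimes.mpr)
    (fun m hm ↦ neg_mem_signedPrimes.mp (by rwa [neg_neg])) (by simp) (by simp)

lemma PrimesR_inter_Icc (a b : ℝ) : PrimesR ∩ Icc a b = (↑) '' (signedPrimes a b : Set ℤ) := by
  ext x
  simp only [PrimesR, mem_inter_iff, mem_ofPred_eq, mem_Icc, mem_image, Finset.mem_coe,
    mem_signedPrimes]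
  constructor
  · rintro ⟨⟨p, hp, rfl | rfl⟩, hx⟩
    · exact ⟨p, by simpa using ⟨hx, hp⟩, by simp⟩
    · exact ⟨-p, by simpa using ⟨hx, hp⟩, by simp⟩
  · rintro ⟨m, ⟨hm, hp⟩, rfl⟩
    refine ⟨⟨m.natAbs, hp, ?_⟩, hm⟩
    rw [Nat.cast_natAbs, Int.cast_abs]
    exact abs_eq_abs.mp (abs_abs _).symm

lemma card_coincidences_signedPrimes_le {a b X : ℝ} (ha : -X ≤ a) (hb : b ≤ X) (h : ℤ) :
    #{m ∈ signedPrimes a b | m + h ∈ signedPrimes a b} ≤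
      #(primePairs h X) + #(primePairs (-h) X) := by
  have h_subset : {m ∈ signedPrimes a b | m + h ∈ signedPrimes a b} ⊆
      (primePairs h X).image (fun p : ℕ ↦ (p : ℤ)) ∪
        (primePairs (-h) X).image (fun p : ℕ ↦ -(p : ℤ)) := by
    intro m hm
    simp only [Finset.mem_filter, mem_signedPrimes] at hm
    obtain ⟨⟨⟨ham, hmb⟩, hm⟩, -, hmh⟩ := hm
    simp only [Finset.mem_union, Finset.mem_image, mem_primePairs]
    obtain ⟨p, rfl | rfl⟩ := m.eq_nat_or_neg
    · push_cast at hmb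
      exact .inl ⟨p, ⟨hmb.trans hb, by simpa using hm, hmh⟩, rfl⟩
    · push_cast at ham
      refine .inr ⟨p, ⟨by linarith, by simpa using hm, ?_⟩, rfl⟩
      rwa [← Int.natAbs_neg, neg_add, neg_neg]
  exact (Finset.card_le_card h_subset).trans ((Finset.card_union_le _ _).trans
    (add_le_add Finset.card_image_le Finset.card_image_le))

lemma card_primes_le_card_signedPrimes {a b u : ℝ} (hb : 0 ≤ b) (hu : a ≤ u) :
    #{p ∈ Finset.Icc ⌈u⌉₊ ⌊b⌋₊ | p.Prime} ≤ #(signedPrimes a b) := by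
  refine Finset.card_le_card_of_injOn (fun p ↦ (p : ℤ)) (fun p hp ↦ ?_)
    Nat.cast_injective.injOn
  obtain ⟨hp_mem, hp⟩ := Finset.mem_filter.mp hp
  obtain ⟨hup, hpb⟩ := (mem_Icc_ceil_floor hb).mp hp_mem
  exact mem_signedPrimes.mpr ⟨⟨by exact_mod_cast hu.trans hup, by exact_mod_cast hpb⟩, hp⟩

lemma monotoneOn_div_log : MonotoneOn (fun x ↦ x / log x) (Ici (exp 1)) := by
  intro x hx y hy hxy
  have h_pos {z : ℝ} (hz : z ∈ Ici (exp 1)) : 0 < log z / z :=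
    div_pos (log_pos ((one_lt_exp_iff.mpr one_pos).trans_le hz)) ((exp_pos 1).trans_le hz)
  simpa using inv_anti₀ (h_pos hy) (log_div_self_antitoneOn hx hy hxy)

lemma mul_div_log_mul_le {k x : ℝ} (hk : 1 ≤ k) (hx : 1 < x) :
    k * x / log (k * x) ≤ k * (x / log x) := by
  have h_log : 0 < log x := log_pos hx
  rw [← mul_div_assoc]
  gcongr
  nlinarith

lemma exists_mul_le_card_signedPrimes_of_half_le {D : ℝ} (hD : 1 < D) :
    ∃ c > 0, ∀ᶠ L : ℝ in atTop, ∀ a b : ℝ, b - a = L → L / 2 ≤ b → b ≤ D * L →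
      c * (L / log L) ≤ #(signedPrimes a b) := by
  have hr : 0 < 1 - D⁻¹ := sub_pos.mpr (inv_lt_one_of_one_lt₀ hD)
  have hr1 : 1 - D⁻¹ < 1 := sub_lt_self 1 (by positivity)
  obtain ⟨c, hc, h_primes⟩ := exists_mul_le_card_primes_residueClass (q := 1) hr hr1 isUnit_one
  simp only [eq_iff_true_of_subsingleton, and_true] at h_primes
  refine ⟨c / 2, half_pos hc, ?_⟩
  have h_half : Tendsto (fun L : ℝ ↦ L / 2) atTop atTop := tendsto_id.atTop_div_const two_pos
  filter_upwards [h_half.eventually_forall_ge_atTop h_primes,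
    h_half.eventually_ge_atTop (exp 1)] with L h_primes hL a b hab hLb hbD
  have h_a : a ≤ (1 - D⁻¹) * b := by
    have : D⁻¹ * b ≤ L := (inv_mul_le_iff₀ (by positivity)).mpr hbD
    linarith
  have h_double := mul_div_log_mul_le one_le_two ((one_lt_exp_iff.mpr one_pos).trans_le hL)
  rw [mul_div_cancel₀ L two_ne_zero] at h_double
  calc c / 2 * (L / log L) ≤ c / 2 * (2 * (L / 2 / log (L / 2))) := by gcongr
    _ = c * (L / 2 / log (L / 2)) := by ring
    _ ≤ c * (b / log b) :=
        mul_le_mul_of_nonneg_left (monotoneOn_div_log hL (hL.trans hLb) hLb) hc.le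
    _ ≤ #{p ∈ Finset.Icc ⌈(1 - D⁻¹) * b⌉₊ ⌊b⌋₊ | p.Prime} := h_primes b hLb
    _ ≤ #(signedPrimes a b) := by
        exact_mod_cast card_primes_le_card_signedPrimes (((exp_pos 1).le.trans hL).trans hLb) h_a

lemma exists_mul_le_card_signedPrimes {d : ℝ} (hd : 0 < d) :
    ∃ c > 0, ∀ᶠ L : ℝ in atTop, ∀ a b : ℝ, b - a = L → |a| ≤ d * L →
      c * (L / log L) ≤ #(signedPrimes a b) := by
  obtain ⟨c, hc, h_lower⟩ := exists_mul_le_card_signedPrimes_of_half_le (lt_add_of_pos_left 1 hd)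
  refine ⟨c, hc, ?_⟩
  filter_upwards [h_lower, eventually_ge_atTop 0] with L h_lower hL a b hab had
  obtain ⟨had, had'⟩ := abs_le.mp had
  obtain hb | hb := le_total (L / 2) b
  · exact h_lower a b hab hb (by linarith)
  · rw [← card_signedPrimes_neg]
    exact h_lower (-b) (-a) (by linarith) (by linarith) (by linarith)

section Intervals

variable {ι : Type*} {l : Filter ι} {a b : ι → ℝ}

lemma isBigO_card_signedPrimes (hw : Tendsto (b - a) l atTop) (hd : a =O[l] (b - a)) :
    (fun i ↦ (b i - a i) / log (b i - a i)) =O[l] fun i ↦ (#(signedPrimes (a i) (b i)) : ℝ) := by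
  obtain ⟨d, hd_pos, hd⟩ := hd.exists_pos
  obtain ⟨c, hc, h_lower⟩ := exists_mul_le_card_signedPrimes hd_pos
  refine IsBigO.of_bound c⁻¹ ?_
  filter_upwards [hd.bound, hw.eventually h_lower, hw.eventually_gt_atTop 1]
    with i hd h_lower hL
  have h_log := log_pos hL
  simp only [Pi.sub_apply, norm_eq_abs] at hd hL h_log h_lower
  rw [abs_of_pos (a := b i - a i) (by linarith)] at hd
  rw [norm_of_nonneg (by positivity), Real.norm_natCast, le_inv_mul_iff₀ hc]
  exact h_lower _ _ rfl hd

lemma isLittleO_card_coincidences_signedPrimes (hw : Tendsto (b - a) l atTop)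
    (hd : a =O[l] (b - a)) {h : ℤ} (hh : h ≠ 0) :
    (fun i ↦
        (#{m ∈ signedPrimes (a i) (b i) | m + h ∈ signedPrimes (a i) (b i)} : ℝ)) =o[l]
      fun i ↦ (b i - a i) / log (b i - a i) := by
  obtain ⟨d, hd_pos, hd⟩ := hd.exists_pos
  have h_scale : (fun i ↦ (d + 1) * (b i - a i) / log ((d + 1) * (b i - a i))) =O[l]
      fun i ↦ (b i - a i) / log (b i - a i) := by
    refine IsBigO.of_bound (d + 1) ?_
    filter_upwards [hw.eventually_gt_atTop 1] with i hL
    have h_log := log_pos hL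
    have h_log' : 0 < log ((d + 1) * (b i - a i)) := log_pos (one_lt_mul (by linarith) hL)
    simp only [Pi.sub_apply] at hL h_log
    rw [norm_of_nonneg (by positivity), norm_of_nonneg (by positivity)]
    exact mul_div_log_mul_le (by linarith) hL
  have h_pairs := ((isLittleO_card_primePairs hh).add
    (isLittleO_card_primePairs (neg_ne_zero.mpr hh))).comp_tendsto
      (hw.const_mul_atTop (by positivity : 0 < d + 1))
  refine IsBigO.trans_isLittleO (.of_norm_eventuallyLE ?_) (h_pairs.trans_isBigO h_scale)
  filter_upwards [hd.bound, hw.eventually_ge_atTop 0] with i hd hL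
  simp only [Pi.sub_apply, norm_eq_abs] at hd hL
  obtain ⟨had, had'⟩ := abs_le.mp (abs_of_nonneg hL ▸ hd)
  simp only [Real.norm_natCast, Function.comp_apply, Pi.sub_apply]
  exact_mod_cast card_coincidences_signedPrimes_le (X := (d + 1) * (b i - a i))
    (by linarith) (by linarith) h

end Intervals

theorem primes_counting_autocorrelation_general_intervals_general
    {ι : Type*} {l : Filter ι} {a b : ι → ℝ}
    (hw : Tendsto (b - a) l atTop) (hd : a =O[l] (b - a)) {f : ℝ → ℂ} (hf : HasCompactSupport f) :
    Tendsto (fun i ↦ autoCorr (PrimesR ∩ Icc (a i) (b i)) f) l (𝓝 (f 0)) := by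
  have h_lower := isBigO_card_signedPrimes hw hd
  simp_rw [PrimesR_inter_Icc]
  refine tendsto_autoCorr_image_intCast ?_ (fun h hh ↦ ?_) hf
  · filter_upwards [h_lower.eq_zero_imp, hw.eventually_gt_atTop 1] with i h_zero hL
    contrapose! h_zero
    exact ⟨by simp [h_zero], (div_pos (one_pos.trans hL) (log_pos hL)).ne'⟩
  · exact ((isLittleO_card_coincidences_signedPrimes hw hd hh).trans_isBigO
      h_lower).tendsto_div_nhds_zero

theorem primes_counting_autocorrelation_general_intervals
    (a b : ℕ → ℝ)
    (hw : Tendsto (fun n => b n - a n) atTop atTop)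
    (hd : ∃ d : ℝ, 0 < d ∧ ∀ n, |a n| < d * (b n - a n)) :
    ∀ f : ℝ → ℂ, Continuous f → HasCompactSupport f →
      Tendsto (fun n => autoCorr (PrimesR ∩ Set.Icc (a n) (b n)) f) atTop (nhds (f 0)) := by
  obtain ⟨d, hd_pos, hd⟩ := hd
  have h_bigO : a =O[atTop] (b - a) := .of_bound d <| .of_forall fun n ↦
    (hd n).le.trans (mul_le_mul_of_nonneg_left (le_abs_self _) hd_pos.le)
  exact fun f _ hf ↦ primes_counting_autocorrelation_general_intervals_general hw h_bigO hf
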